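/- For every integer r ≥ 2 there exists a constant C > 0 such that for every integer t ≥ 2 and every integer N ≥ C·t^r/log t, every r-graph G on N vertices either contains a copy of T_r or has an independent set of size t. In other words, the Ramsey number R(T_r, K_t^{(r)}) is O(t^r/log t). -/

import Mathlib

open Finset
open scoped Classical

/-- `Z` is an independent set of the hypergraph `H`: it contains no edge. -/
def IsIndep {V : Type*} [DecidableEq V] (H : Finset (Finset V)) (Z : Finset V) : Prop :=
  ∀ e ∈ H, ¬ e ⊆ Z

/-- The independence number of a hypergraph on a finite vertex type. -/
noncomputable def indepNum {V : Type*} [Fintype V] [DecidableEq V]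
    (H : Finset (Finset V)) : ℕ :=
  ((Finset.univ : Finset V).powerset.filter (fun Z => IsIndep H Z)).sup Finset.card

/-- `H` has maximum `r`-degree at most `d`: every `r`-element vertex set is
contained in at most `d` edges. -/
def maxDegLe {V : Type*} [DecidableEq V] (r : ℕ) (H : Finset (Finset V)) (d : ℕ) : Prop :=
  ∀ S : Finset V, S.card = r → (H.filter (fun e => S ⊆ e)).card ≤ d

/-- `G` contains a copy of `T_r`: there are disjoint vertex sets `S`, `R` with
`|S| = r−1`, `|R| = r`, such that `R ∈ G` and `S ∪ {v} ∈ G` for every `v ∈ R`. -/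
def ContainsTr {V : Type*} [DecidableEq V] (r : ℕ) (G : Finset (Finset V)) : Prop :=
  ∃ S R : Finset V, Disjoint S R ∧ S.card = r - 1 ∧ R.card = r ∧
    R ∈ G ∧ ∀ v ∈ R, insert v S ∈ G

/-
Fix a `T_r`-free `r`-graph on `n` vertices without independent sets of more than `t` elements, and
put `b = r - 1`. The common neighbourhood of a `b`-set is independent, so `b`-sets have degree at
most `t`.

Keep each vertex with probability `p` to obtain a random set `U`, and let `W` be a uniformly random
independent subset of `U`. Let `v ∉ U` and consider the `b`-sets in `U` that form an edge with `v`.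
Unless three edges around `v` form a rare configuration in `insert v U`, conditioning on the part of
`W` outside the union of these `b`-sets leaves `a` of them available, each contained in `W` with
probability at least `2 ^ (-b)`, while with probability at least `(1 - 2 ^ (-b)) ^ a` none of them
is contained in `W`, so that `v` can be added to `W`. Whatever the value of `a`, the expected number
of these `b`-sets in `W` plus `M` times the probability that `v` can be added is therefore at least
`2 ^ (-b) * log M`.

Summed over `v`, the first term is at most `t ^ b * t`, and the second is at most `2 * M / p * t`,
because a set obtained by adding `v` is an independent subset of `insert v U`. With `M` a small
power of `t` and `p * n` slightly larger than `t`, the rare configurations are negligible and the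
second term is `O(n)`, whence `n * log t = O(t ^ r)`.
-/

open scoped BigOperators

theorem isIndep_mono {V : Type*} [DecidableEq V] {H : Finset (Finset V)} {W Z : Finset V}
    (hZ : IsIndep H Z) (hWZ : W ⊆ Z) : IsIndep H W :=
  fun e he heW => hZ e he (heW.trans hWZ)

section SetFamily

variable {α : Type*} [DecidableEq α] {A I K L : Finset (Finset α)} {B e : Finset α} {b : ℕ}

theorem two_pow_mul_card_filter_superset_le (h : ∀ W ∈ A, ∀ s ⊆ e, W \ s ∈ A) :
    2 ^ #e * #{W ∈ A | e ⊆ W} ≤ #A := by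
  rw [← card_powerset, ← card_product]
  refine card_le_card_of_injOn (fun x => x.2 \ x.1) ?_ ?_
  · rintro ⟨s, W⟩ hx
    simp only [mem_coe, mem_product, mem_powerset, mem_filter] at hx
    exact h W hx.2.1 s hx.1
  · refine Set.LeftInvOn.injOn (f₁' := fun X => (e \ X, X ∪ e)) ?_
    rintro ⟨s, W⟩ hx
    clear h
    simp only [mem_coe, mem_product, mem_powerset, mem_filter, Prod.mk.injEq] at hx ⊢
    grind

theorem card_le_two_pow_mul_card_filter_superset (h : ∀ W ∈ A, W ∪ e ∈ A) :
    #A ≤ 2 ^ #e * #{W ∈ A | e ⊆ W} := by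
  rw [← card_powerset, ← card_product]
  refine card_le_card_of_injOn (fun W => (W ∩ e, W ∪ e)) ?_ ?_
  · intro W hW
    simpa using h W hW
  · intro W _ W' _ heq
    rw [Prod.mk.injEq] at heq
    exact eq_of_inf_eq_sup_eq heq.1 heq.2

theorem one_sub_pow_mul_card_le_card_filter_isIndep (hA : ∀ W ∈ A, ∀ s ⊆ B, W \ s ∈ A)
    (hK : ∀ e ∈ K, e ⊆ B ∧ #e = b) :
    (1 - (1 / 2 : ℝ) ^ b) ^ #K * #A ≤ #{W ∈ A | IsIndep K W} := by
  induction K using Finset.induction_on generalizing A with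
  | empty => simp [IsIndep]
  | insert e K he ih =>
    obtain ⟨heB, rfl⟩ := hK e (mem_insert_self e K)
    have havoid := ih (A := {W ∈ A | ¬e ⊆ W})
      (fun W hW s hs => by
        rw [mem_filter] at hW ⊢
        exact ⟨hA W hW.1 s hs, fun h => hW.2 (h.trans sdiff_subset)⟩)
      (fun f hf => hK f (mem_insert_of_mem hf))
    have hcontain : (#{W ∈ A | e ⊆ W} : ℝ) ≤ (1 / 2) ^ #e * #A := by
      rw [one_div_pow, one_div, le_inv_mul_iff₀ (by positivity)]
      exact_mod_cast two_pow_mul_card_filter_superset_le fun W hW s hs => hA W hW s (hs.trans heB)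
    have hsplit : (#{W ∈ A | e ⊆ W} : ℝ) + #{W ∈ A | ¬e ⊆ W} = #A := by
      exact_mod_cast card_filter_add_card_filter_not (s := A) (e ⊆ ·)
    have hq : (0 : ℝ) ≤ 1 - (1 / 2) ^ #e :=
      sub_nonneg.2 (pow_le_one₀ (by norm_num) (by norm_num))
    calc (1 - (1 / 2 : ℝ) ^ #e) ^ #(insert e K) * #A
        = (1 - (1 / 2 : ℝ) ^ #e) ^ #K * ((1 - (1 / 2 : ℝ) ^ #e) * #A) := by
          rw [card_insert_of_notMem he, pow_succ, mul_assoc]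
      _ ≤ (1 - (1 / 2 : ℝ) ^ #e) ^ #K * #{W ∈ A | ¬e ⊆ W} := by gcongr; linarith
      _ ≤ #{W ∈ {W ∈ A | ¬e ⊆ W} | IsIndep K W} := havoid
      _ = #{W ∈ A | IsIndep (insert e K) W} := by
          rw [filter_filter]
          congr! 4
          simp only [IsIndep, forall_mem_insert]

theorem mul_log_le_mul_add_mul_pow {q M : ℝ} (hq : 0 ≤ q) (hq' : q ≤ 1 / 2) (hM : 0 < M) (a : ℕ) :
    q * Real.log M ≤ a * q + M * (1 - q) ^ a := by
  have hexp : Real.exp (-1) ≤ 1 - q := by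
    rw [Real.exp_neg]
    have := inv_anti₀ two_pos (by linarith [Real.add_one_le_exp 1] : (2 : ℝ) ≤ Real.exp 1)
    linarith
  have hpow : Real.log M - a ≤ M * (1 - q) ^ a :=
    calc Real.log M - a ≤ Real.exp (Real.log M - a) := by
          linarith [Real.add_one_le_exp (Real.log M - a)]
      _ = M * Real.exp (-1) ^ a := by
          rw [← Real.exp_nat_mul, sub_eq_add_neg, Real.exp_add, Real.exp_log hM, mul_neg_one]
      _ ≤ M * (1 - q) ^ a := by gcongr
  have hnonneg : 0 ≤ M * (1 - q) ^ a := by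
    have : 0 ≤ 1 - q := by linarith
    positivity
  nlinarith

/-- The quantity averaged over a random independent set `W` in Shearer's argument: the number of
edges of `K` inside `W`, plus a reward `M` if there are none. With `K` the link of a vertex `v`, the
reward is paid when `v` can be added to `W`. -/
noncomputable def linkScore (K : Finset (Finset α)) (M : ℝ) (W : Finset α) : ℝ :=
  #{e ∈ K | e ⊆ W} + if IsIndep K W then M else 0

theorem linkScore_congr {W : Finset α} (h : ∀ e ⊆ W, e ∈ K ↔ e ∈ L) (M : ℝ) :
    linkScore K M W = linkScore L M W := by
  have hfilter : {e ∈ K | e ⊆ W} = {e ∈ L | e ⊆ W} := by grind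
  have hindep : IsIndep K W ↔ IsIndep L W := by grind [IsIndep]
  simp only [linkScore, hfilter, hindep]

theorem sum_linkScore (A K : Finset (Finset α)) (M : ℝ) :
    ∑ W ∈ A, linkScore K M W =
      ∑ W ∈ A, (#{e ∈ K | e ⊆ W} : ℝ) + M * #{W ∈ A | IsIndep K W} := by
  simp only [linkScore, sum_add_distrib, ← sum_filter, sum_const, nsmul_eq_mul, mul_comm]

theorem mul_log_mul_card_le_sum_linkScore_of_closed (hb : 1 ≤ b) {M : ℝ} (hM : 0 < M)
    (hK : ∀ e ∈ K, e ⊆ B ∧ #e = b) (hdown : ∀ W ∈ A, ∀ s ⊆ B, W \ s ∈ A)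
    (hup : ∀ e ∈ K, ∀ W ∈ A, W ∪ e ∈ A) :
    (1 / 2) ^ b * Real.log M * #A ≤ ∑ W ∈ A, linkScore K M W := by
  have hcount : (#K : ℝ) * (1 / 2) ^ b * #A ≤ ∑ W ∈ A, (#{e ∈ K | e ⊆ W} : ℝ) :=
    calc (#K : ℝ) * (1 / 2) ^ b * #A = ∑ _e ∈ K, (1 / 2 : ℝ) ^ b * #A := by
          rw [sum_const, nsmul_eq_mul, mul_assoc]
      _ ≤ ∑ e ∈ K, (#{W ∈ A | e ⊆ W} : ℝ) := sum_le_sum fun e he => by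
          rw [one_div_pow, one_div, inv_mul_le_iff₀ (by positivity), ← (hK e he).2]
          exact_mod_cast card_le_two_pow_mul_card_filter_superset (hup e he)
      _ = ∑ W ∈ A, (#{e ∈ K | e ⊆ W} : ℝ) := by
          simp only [card_filter, Nat.cast_sum]
          exact sum_comm
  have hindep := one_sub_pow_mul_card_le_card_filter_isIndep hdown hK
  have hq : (1 / 2 : ℝ) ^ b ≤ 1 / 2 := pow_le_of_le_one (by norm_num) (by norm_num) (by omega)
  calc (1 / 2) ^ b * Real.log M * #A
      ≤ (#K * (1 / 2) ^ b + M * (1 - (1 / 2) ^ b) ^ #K) * #A := by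
        gcongr
        exact mul_log_le_mul_add_mul_pow (by positivity) hq hM #K
    _ = #K * (1 / 2) ^ b * #A + M * ((1 - (1 / 2) ^ b) ^ #K * #A) := by ring
    _ ≤ ∑ W ∈ A, (#{e ∈ K | e ⊆ W} : ℝ) + M * #{W ∈ A | IsIndep K W} := by gcongr
    _ = ∑ W ∈ A, linkScore K M W := (sum_linkScore A K M).symm

/- Condition on `Z = W \ ⋃ L`. Because the outcome of adding `e` depends on `Z` only, on each fibre
the relevant edges are those `e` with `Z ∪ e ∈ I`, and the fibre is closed under adding them. -/
theorem mul_log_mul_card_le_sum_linkScore (hb : 1 ≤ b) {M : ℝ} (hM : 0 < M)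
    (hL : ∀ e ∈ L, #e = b) (hI : IsLowerSet (I : Set (Finset α)))
    (hadd : ∀ W ∈ I, ∀ e ∈ L, (W \ L.biUnion id) ∪ e ∈ I → W ∪ e ∈ I) :
    (1 / 2) ^ b * Real.log M * #I ≤ ∑ W ∈ I, linkScore L M W := by
  set B := L.biUnion id
  have hLB : ∀ e ∈ L, e ⊆ B := fun e he => subset_biUnion_of_mem id he
  have hmaps : ∀ W ∈ I, W \ B ∈ I := fun W hW => hI sdiff_subset hW
  have hfibre : ∀ Z ∈ I, (1 / 2) ^ b * Real.log M * #{W ∈ I | W \ B = Z} ≤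
      ∑ W ∈ I with W \ B = Z, linkScore L M W := fun Z _ => by
    refine (mul_log_mul_card_le_sum_linkScore_of_closed (K := {e ∈ L | Z ∪ e ∈ I}) (B := B)
      hb hM ?_ ?_ ?_).trans_eq (sum_congr rfl fun W hW => linkScore_congr (fun e heW => ?_) M)
    · intro e he
      exact ⟨hLB e (filter_subset _ _ he), hL e (filter_subset _ _ he)⟩
    · intro W hW s hs
      simp only [mem_filter] at hW ⊢
      exact ⟨hI sdiff_subset hW.1, by grind⟩
    · intro e he W hW
      simp only [mem_filter] at he hW ⊢
      obtain ⟨hWI, rfl⟩ := hW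
      exact ⟨hadd W hWI e he.1 he.2, by grind⟩
    · simp only [mem_filter] at hW ⊢
      obtain ⟨hWI, rfl⟩ := hW
      exact and_iff_left (hI (union_subset sdiff_subset heW) hWI)
  calc (1 / 2) ^ b * Real.log M * #I
      = ∑ Z ∈ I, (1 / 2) ^ b * Real.log M * #{W ∈ I | W \ B = Z} := by
        rw [card_eq_sum_card_fiberwise hmaps, Nat.cast_sum, mul_sum]
    _ ≤ ∑ Z ∈ I, ∑ W ∈ I with W \ B = Z, linkScore L M W := sum_le_sum hfibre
    _ = ∑ W ∈ I, linkScore L M W := sum_fiberwise_of_maps_to hmaps _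

end SetFamily

section BernoulliSampling

variable {V : Type*} [Fintype V] {p : ℝ}

/-- The probability that a random subset of `V`, containing each vertex independently with
probability `p`, is equal to `U`. -/
noncomputable def bernoulliWeight (p : ℝ) (U : Finset V) : ℝ :=
  p ^ #U * (1 - p) ^ (Fintype.card V - #U)

/-- The probability that a random subset of `V`, containing each vertex independently with
probability `p`, has the property `P`. -/
noncomputable def bernoulliProb (p : ℝ) (P : Finset V → Prop) : ℝ :=
  ∑ U with P U, bernoulliWeight p U

theorem bernoulliWeight_nonneg (hp : 0 ≤ p) (hp' : p ≤ 1) (U : Finset V) :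
    0 ≤ bernoulliWeight p U :=
  mul_nonneg (pow_nonneg hp _) (pow_nonneg (sub_nonneg.2 hp') _)

theorem sum_bernoulliWeight (p : ℝ) : ∑ U : Finset V, bernoulliWeight p U = 1 := by
  simp only [bernoulliWeight, Fintype.sum_pow_mul_eq_add_pow, add_sub_cancel, one_pow]

theorem mul_bernoulliWeight_le_bernoulliWeight_insert [DecidableEq V] (hp : 0 ≤ p)
    (hp' : p ≤ 1) {U : Finset V} {v : V} (hv : v ∉ U) :
    p * bernoulliWeight p U ≤ bernoulliWeight p (insert v U) := by
  have hq : 0 ≤ 1 - p := sub_nonneg.2 hp'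
  have hexp : (1 - p) ^ (Fintype.card V - #U) ≤ (1 - p) ^ (Fintype.card V - (#U + 1)) :=
    pow_le_pow_of_le_one hq (by linarith) (by omega)
  calc p * bernoulliWeight p U = p ^ (#U + 1) * (1 - p) ^ (Fintype.card V - #U) := by
        rw [bernoulliWeight]; ring
    _ ≤ bernoulliWeight p (insert v U) := by
        rw [bernoulliWeight, card_insert_of_notMem hv]; gcongr

theorem mul_bernoulliProb_le_sum {c : ℝ} {P : Finset V → Prop} {f : Finset V → ℝ}
    (hf : ∀ U, 0 ≤ f U) (h : ∀ U, P U → c * bernoulliWeight p U ≤ f U) :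
    c * bernoulliProb p P ≤ ∑ U, f U := by
  rw [bernoulliProb, mul_sum]
  exact (sum_le_sum fun U hU => h U (mem_filter.1 hU).2).trans
    (sum_le_sum_of_subset_of_nonneg (filter_subset _ _) fun U _ _ => hf U)

theorem sum_filter_notMem_insert_le [DecidableEq V] {g : Finset V → ℝ} (hg : ∀ U, 0 ≤ g U)
    (v : V) : ∑ U with v ∉ U, g (insert v U) ≤ ∑ U, g U := by
  rw [← sum_image (f := g) fun U hU W hW h => ?_]
  · exact sum_le_sum_of_subset_of_nonneg (subset_univ _) fun U _ _ => hg U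
  · rw [← erase_insert (mem_filter.1 hU).2, h, erase_insert (mem_filter.1 hW).2]

theorem bernoulliProb_and_add_bernoulliProb_and_not (p : ℝ) (P Q : Finset V → Prop) :
    bernoulliProb p (fun U => P U ∧ Q U) + bernoulliProb p (fun U => P U ∧ ¬Q U) =
      bernoulliProb p P := by
  simp only [bernoulliProb, ← filter_filter]
  exact sum_filter_add_sum_filter_not _ _ _

theorem bernoulliProb_superset (p : ℝ) (S : Finset V) : bernoulliProb p (S ⊆ ·) = p ^ #S := by
  have hprod : ∀ U : Finset V, ∏ v ∈ univ \ U, (if v ∈ S then 0 else 1 - p) =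
      if S ⊆ U then (1 - p) ^ (Fintype.card V - #U) else 0 := fun U => by
    split_ifs with hSU
    · rw [prod_congr rfl fun v hv => if_neg fun hvS => (mem_sdiff.1 hv).2 (hSU hvS), prod_const,
        card_univ_sdiff]
    · obtain ⟨v, hvS, hvU⟩ := not_subset.1 hSU
      exact prod_eq_zero (mem_sdiff.2 ⟨mem_univ v, hvU⟩) (if_pos hvS)
  calc bernoulliProb p (S ⊆ ·)
      = ∑ U ∈ univ.powerset, (∏ _v ∈ U, p) * ∏ v ∈ univ \ U, (if v ∈ S then 0 else 1 - p) := by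
        simp only [bernoulliProb, bernoulliWeight, sum_filter, hprod, prod_const, mul_ite, mul_zero,
          powerset_univ]
    _ = ∏ v, (p + if v ∈ S then 0 else 1 - p) := (prod_add _ _ _).symm
    _ = p ^ #S := by
        simp only [add_ite, add_zero, add_sub_cancel, prod_ite_mem, univ_inter, prod_const]

theorem bernoulliProb_notMem (p : ℝ) (v : V) : bernoulliProb p (v ∉ ·) = 1 - p := by
  have hmem : bernoulliProb p (v ∈ ·) = p := by
    simpa only [singleton_subset_iff, card_singleton, pow_one] using bernoulliProb_superset p {v}
  have hsplit : bernoulliProb p (v ∈ ·) + bernoulliProb p (v ∉ ·) = 1 := by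
    rw [← sum_bernoulliWeight (V := V) p]
    simpa only [bernoulliProb] using sum_filter_add_sum_filter_not univ (v ∈ ·) _
  linarith

theorem bernoulliProb_le_sum_pow_card {ι : Type*} {P : Finset V → Prop} {s : Finset ι}
    {S : ι → Finset V} (hp : 0 ≤ p) (hp' : p ≤ 1) (h : ∀ U, P U → ∃ i ∈ s, S i ⊆ U) :
    bernoulliProb p P ≤ ∑ i ∈ s, p ^ #(S i) :=
  calc bernoulliProb p P
      ≤ ∑ U, ∑ i ∈ s, (if S i ⊆ U then bernoulliWeight p U else 0) := by
        rw [bernoulliProb, sum_filter]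
        refine sum_le_sum fun U _ => ?_
        have hterm : ∀ i ∈ s, 0 ≤ if S i ⊆ U then bernoulliWeight p U else 0 := fun i _ => by
          split_ifs <;> simp only [bernoulliWeight_nonneg hp hp', le_refl]
        split_ifs with hU
        · obtain ⟨i, hi, hiU⟩ := h U hU
          exact (if_pos hiU).ge.trans (single_le_sum hterm hi)
        · exact sum_nonneg hterm
    _ = ∑ i ∈ s, bernoulliProb p (S i ⊆ ·) := by
        rw [sum_comm]
        simp only [bernoulliProb, sum_filter]
    _ = ∑ i ∈ s, p ^ #(S i) := by simp only [bernoulliProb_superset]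

end BernoulliSampling

section IndepAveraging

variable {V : Type*} [DecidableEq V] {G : Finset (Finset V)} {U W : Finset V} {v : V} {b : ℕ}

/-- The family of independent sets of `G` contained in `U`. -/
noncomputable def indepFamily (G : Finset (Finset V)) (U : Finset V) : Finset (Finset V) :=
  {W ∈ U.powerset | IsIndep G W}

/-- The sets `e ⊆ W` such that `insert v e` is an edge of `G` and `v ∉ e`: these are the sets that
prevent `v` from being added to the independent set `W`. -/
noncomputable def blockingSets (G : Finset (Finset V)) (v : V) (W : Finset V) :
    Finset (Finset V) :=
  {e ∈ G.memberSubfamily v | e ⊆ W}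

/-- Two edges `f₁`, `f₂` through `v` and an edge `f` avoiding `v`, all inside `insert v U`, such
that `f` meets both `f₁` and `f₂ \ f₁`. Without such a triple, whether `f₁.erase v` can be added to
an independent set `W ⊆ U` depends only on the part of `W` outside the link of `v`. -/
def IsObstructed (G : Finset (Finset V)) (v : V) (U : Finset V) : Prop :=
  ∃ f₁ ∈ G, ∃ f₂ ∈ G, ∃ f ∈ G, v ∈ f₁ ∧ v ∈ f₂ ∧ v ∉ f ∧ ¬Disjoint f f₁ ∧ ¬Disjoint f (f₂ \ f₁) ∧
    f₁ ∪ f₂ ∪ f ⊆ insert v U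

theorem mem_indepFamily : W ∈ indepFamily G U ↔ W ⊆ U ∧ IsIndep G W := by
  simp only [indepFamily, mem_filter, mem_powerset]

theorem mem_blockingSets {e : Finset V} :
    e ∈ blockingSets G v W ↔ insert v e ∈ G ∧ v ∉ e ∧ e ⊆ W := by
  simp only [blockingSets, mem_filter, mem_memberSubfamily, and_assoc]

theorem indepFamily_nonempty (hG : ∅ ∉ G) (U : Finset V) : (indepFamily G U).Nonempty :=
  ⟨∅, mem_indepFamily.2 ⟨empty_subset U, fun _ he h => hG (subset_empty.1 h ▸ he)⟩⟩

theorem isLowerSet_indepFamily (G : Finset (Finset V)) (U : Finset V) :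
    IsLowerSet (indepFamily G U : Set (Finset V)) := fun W Z hZW hW => by
  rw [mem_coe, mem_indepFamily] at hW ⊢
  exact ⟨hZW.trans hW.1, isIndep_mono hW.2 hZW⟩

theorem isIndep_insert_iff (hWU : W ⊆ U) :
    IsIndep G (insert v W) ↔ IsIndep G W ∧ IsIndep (blockingSets G v U) W := by
  refine ⟨fun h => ⟨isIndep_mono h (subset_insert v W), fun e he heW => ?_⟩, fun h f hf hfW => ?_⟩
  · exact h _ (mem_blockingSets.1 he).1 (insert_subset_insert v heW)
  · by_cases hvf : v ∈ f
    · have hfW' : f.erase v ⊆ W := subset_insert_iff.1 hfW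
      exact h.2 _ (mem_blockingSets.2
        ⟨(insert_erase hvf).symm ▸ hf, notMem_erase v f, hfW'.trans hWU⟩) hfW'
    · exact h.1 f hf ((subset_insert_iff_of_notMem hvf).1 hfW)

theorem card_filter_mem_indepFamily_insert (hv : v ∉ U) :
    #{W ∈ indepFamily G (insert v U) | v ∈ W} =
      #{W ∈ indepFamily G U | IsIndep (blockingSets G v U) W} := by
  refine card_nbij' (erase · v) (insert v) ?_ ?_ ?_ ?_
  · intro W hW
    simp only [mem_coe, mem_filter, mem_indepFamily] at hW ⊢
    obtain ⟨⟨hWU, hindep⟩, hvW⟩ := hW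
    rw [← insert_erase hvW, isIndep_insert_iff (subset_insert_iff.1 hWU)] at hindep
    exact ⟨⟨subset_insert_iff.1 hWU, hindep.1⟩, hindep.2⟩
  · intro W hW
    simp only [mem_coe, mem_filter, mem_indepFamily] at hW ⊢
    obtain ⟨⟨hWU, hindep⟩, hblock⟩ := hW
    exact ⟨⟨insert_subset_insert v hWU,
      (isIndep_insert_iff hWU).2 ⟨hindep, hblock⟩⟩, mem_insert_self v W⟩
  · exact fun W hW => insert_erase (mem_filter.1 hW).2
  · exact fun W hW => erase_insert fun h => hv ((mem_indepFamily.1 (mem_filter.1 hW).1).1 h)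

theorem card_indepFamily_insert_le (hv : v ∉ U) :
    #(indepFamily G (insert v U)) ≤ 2 * #(indepFamily G U) := by
  have hmem : #{W ∈ indepFamily G (insert v U) | v ∈ W} ≤ #(indepFamily G U) :=
    (card_filter_mem_indepFamily_insert hv).trans_le (card_filter_le _ _)
  have hnotMem : #{W ∈ indepFamily G (insert v U) | v ∉ W} ≤ #(indepFamily G U) :=
    card_le_card fun W hW => by
      simp only [mem_filter, mem_indepFamily] at hW ⊢
      exact ⟨(subset_insert_iff_of_notMem hW.2).1 hW.1.1, hW.1.2⟩
  have := card_filter_add_card_filter_not (s := indepFamily G (insert v U)) (v ∈ ·)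
  omega

theorem union_mem_indepFamily_of_not_isObstructed (hv : v ∉ U) (hU : ¬IsObstructed G v U)
    {e : Finset V} (hW : W ∈ indepFamily G U) (he : e ∈ blockingSets G v U)
    (hWe : (W \ (blockingSets G v U).biUnion id) ∪ e ∈ indepFamily G U) :
    W ∪ e ∈ indepFamily G U := by
  rw [mem_indepFamily] at hW hWe ⊢
  obtain ⟨heG, -, heU⟩ := mem_blockingSets.1 he
  have hWeU : W ∪ e ⊆ U := union_subset hW.1 heU
  refine ⟨hWeU, fun f hf hfW => hU ?_⟩
  obtain ⟨x, hxf, hxW⟩ := not_subset.1 (hW.2 f hf)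
  obtain ⟨y, hyf, hy⟩ := not_subset.1 (hWe.2 f hf)
  have hxe : x ∈ e := (mem_union.1 (hfW hxf)).resolve_left hxW
  have hye : y ∉ e := fun h => hy (mem_union_right _ h)
  have hyW : y ∈ W := (mem_union.1 (hfW hyf)).resolve_right hye
  have hyv : y ≠ v := fun h => hv (h ▸ hWeU (hfW hyf))
  obtain ⟨e', he', hye'⟩ : ∃ e' ∈ blockingSets G v U, y ∈ e' := by
    by_contra! hcon
    exact hy (mem_union_left _ (mem_sdiff.2 ⟨hyW, by simpa using hcon⟩))
  obtain ⟨heG', -, heU'⟩ := mem_blockingSets.1 he'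
  refine ⟨insert v e, heG, insert v e', heG', f, hf, mem_insert_self v e, mem_insert_self v e',
    fun h => hv (hWeU (hfW h)), not_disjoint_iff.2 ⟨x, hxf, mem_insert_of_mem hxe⟩,
    not_disjoint_iff.2 ⟨y, hyf, mem_sdiff.2 ⟨mem_insert_of_mem hye', by simp [hyv, hye]⟩⟩, ?_⟩
  exact union_subset (union_subset (insert_subset_insert v heU) (insert_subset_insert v heU'))
    (hfW.trans (hWeU.trans (subset_insert v U)))

/-- The probability that `v` lies in a uniformly random independent subset of `U`. -/
noncomputable def occupancy (G : Finset (Finset V)) (v : V) (U : Finset V) : ℝ :=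
  𝔼 W ∈ indepFamily G U, if v ∈ W then 1 else 0

/-- The expected number of blocking sets for `v` in a uniformly random independent subset of `U`. -/
noncomputable def meanBlocking (G : Finset (Finset V)) (v : V) (U : Finset V) : ℝ :=
  𝔼 W ∈ indepFamily G U, (#(blockingSets G v W) : ℝ)

theorem occupancy_nonneg (G : Finset (Finset V)) (v : V) (U : Finset V) : 0 ≤ occupancy G v U :=
  expect_nonneg fun _ _ => by split_ifs <;> norm_num

theorem meanBlocking_nonneg (G : Finset (Finset V)) (v : V) (U : Finset V) :
    0 ≤ meanBlocking G v U :=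
  expect_nonneg fun _ _ => Nat.cast_nonneg _

theorem card_filter_isIndep_blockingSets_le (hv : v ∉ U) :
    (#{W ∈ indepFamily G U | IsIndep (blockingSets G v U) W} : ℝ) ≤
      #(indepFamily G U) * (2 * occupancy G v (insert v U)) := by
  have hle : (#(indepFamily G (insert v U)) : ℝ) ≤ 2 * #(indepFamily G U) := by
    exact_mod_cast card_indepFamily_insert_le hv
  calc (#{W ∈ indepFamily G U | IsIndep (blockingSets G v U) W} : ℝ)
      = #(indepFamily G (insert v U)) * occupancy G v (insert v U) := by
        rw [occupancy, card_mul_expect, sum_boole, card_filter_mem_indepFamily_insert hv]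
    _ ≤ 2 * #(indepFamily G U) * occupancy G v (insert v U) := by
        gcongr
        exact occupancy_nonneg G v _
    _ = #(indepFamily G U) * (2 * occupancy G v (insert v U)) := by ring

theorem mul_log_le_meanBlocking_add_occupancy (hb : 1 ≤ b) (hG : ∀ e ∈ G, #e = b + 1) {M : ℝ}
    (hM : 0 < M) (hv : v ∉ U) (hU : ¬IsObstructed G v U) :
    (1 / 2) ^ b * Real.log M ≤ meanBlocking G v U + 2 * M * occupancy G v (insert v U) := by
  have hpos : (0 : ℝ) < #(indepFamily G U) := by
    exact_mod_cast (indepFamily_nonempty (fun h => by simpa using hG ∅ h) U).card_pos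
  have hblock : ∑ W ∈ indepFamily G U, (#{e ∈ blockingSets G v U | e ⊆ W} : ℝ) =
      #(indepFamily G U) * meanBlocking G v U := by
    rw [meanBlocking, card_mul_expect]
    refine sum_congr rfl fun W hW => ?_
    congr 2
    have := (mem_indepFamily.1 hW).1
    grind [mem_blockingSets]
  have hscore : (1 / 2) ^ b * Real.log M * #(indepFamily G U) ≤
      ∑ W ∈ indepFamily G U, linkScore (blockingSets G v U) M W := by
    refine mul_log_mul_card_le_sum_linkScore hb hM (fun e he => ?_) (isLowerSet_indepFamily G U)
      fun W hW e he => union_mem_indepFamily_of_not_isObstructed hv hU hW he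
    obtain ⟨heG, hve, -⟩ := mem_blockingSets.1 he
    have := hG _ heG
    rw [card_insert_of_notMem hve] at this
    omega
  refine le_of_mul_le_mul_right ?_ hpos
  calc (1 / 2) ^ b * Real.log M * #(indepFamily G U)
      ≤ #(indepFamily G U) * meanBlocking G v U +
        M * #{W ∈ indepFamily G U | IsIndep (blockingSets G v U) W} := by
        rwa [sum_linkScore, hblock] at hscore
    _ ≤ #(indepFamily G U) * meanBlocking G v U +
        M * (#(indepFamily G U) * (2 * occupancy G v (insert v U))) := by
        gcongr
        exact card_filter_isIndep_blockingSets_le hv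
    _ = (meanBlocking G v U + 2 * M * occupancy G v (insert v U)) * #(indepFamily G U) := by ring

variable [Fintype V] {d t : ℕ} {p M : ℝ}

theorem sum_occupancy (G : Finset (Finset V)) (U : Finset V) :
    ∑ v, occupancy G v U = 𝔼 W ∈ indepFamily G U, (#W : ℝ) := by
  simp only [occupancy, ← expect_sum_comm, sum_ite_mem, univ_inter, sum_const,
    nsmul_eq_mul, mul_one]

theorem sum_card_blockingSets_le (hG : ∀ e ∈ G, #e = b + 1) (hdeg : maxDegLe b G d)
    (W : Finset V) : ∑ v, #(blockingSets G v W) ≤ (#W).choose b * d := by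
  have hcard : ∀ v, ∀ S ∈ blockingSets G v W, S ∈ W.powersetCard b := fun v S hS => by
    obtain ⟨hSG, hvS, hSW⟩ := mem_blockingSets.1 hS
    have := hG _ hSG
    rw [card_insert_of_notMem hvS] at this
    exact mem_powersetCard.2 ⟨hSW, by omega⟩
  have hext : ∀ S ∈ W.powersetCard b, #{v | S ∈ blockingSets G v W} ≤ d := fun S hS => by
    refine (card_le_card_of_injOn (insert · S) (fun v hv => ?_) fun v hv w hw h => ?_).trans
      (hdeg S (mem_powersetCard.1 hS).2)
    · simp only [mem_coe, mem_filter, mem_blockingSets] at hv ⊢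
      exact ⟨hv.2.1, subset_insert v S⟩
    · simp only [mem_coe, mem_filter, mem_blockingSets] at hv hw
      exact (insert_inj hv.2.2.1).1 h
  calc ∑ v, #(blockingSets G v W)
      = ∑ v, #{S ∈ W.powersetCard b | S ∈ blockingSets G v W} := by
        refine sum_congr rfl fun v _ => congrArg card ?_
        rw [filter_mem_eq_inter, inter_eq_right.2 (hcard v)]
    _ = ∑ S ∈ W.powersetCard b, #{v | S ∈ blockingSets G v W} := by
        simp only [card_filter]
        exact sum_comm
    _ ≤ #(W.powersetCard b) * d := sum_le_card_nsmul _ _ _ hext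
    _ = (#W).choose b * d := by rw [card_powersetCard]

theorem sum_meanBlocking_le (hG : ∀ e ∈ G, #e = b + 1) (hdeg : maxDegLe b G d)
    (hind : ∀ W, IsIndep G W → #W ≤ t) (U : Finset V) :
    ∑ v, meanBlocking G v U ≤ t ^ b * d := by
  simp only [meanBlocking, ← expect_sum_comm]
  refine expect_le (indepFamily_nonempty (fun h => by simpa using hG ∅ h) U) fun W hW => ?_
  have hWt : (#W).choose b ≤ t ^ b :=
    (Nat.choose_le_pow _ _).trans (Nat.pow_le_pow_left (hind W (mem_indepFamily.1 hW).2) b)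
  exact_mod_cast (sum_card_blockingSets_le hG hdeg W).trans (Nat.mul_le_mul_right d hWt)

theorem sum_occupancy_le (hG : ∅ ∉ G) (hind : ∀ W, IsIndep G W → #W ≤ t) (U : Finset V) :
    ∑ v, occupancy G v U ≤ t := by
  rw [sum_occupancy]
  exact expect_le (indepFamily_nonempty hG U) fun W hW =>
    Nat.cast_le.2 (hind W (mem_indepFamily.1 hW).2)

/- Passing from `U` to `insert v U` multiplies its weight by at least `p`, whence the `1 / p`. -/
theorem mul_log_mul_bernoulliProb_le (hb : 1 ≤ b) (hG : ∀ e ∈ G, #e = b + 1) (hM : 0 < M)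
    (hp : 0 < p) (hp' : p ≤ 1) (v : V) :
    (1 / 2) ^ b * Real.log M * bernoulliProb p (fun U => v ∉ U ∧ ¬IsObstructed G v U) ≤
      ∑ U, bernoulliWeight p U * (meanBlocking G v U + 2 * M / p * occupancy G v U) := by
  set reward : Finset V → ℝ := fun U => 2 * M / p * (bernoulliWeight p U * occupancy G v U)
  have hw := bernoulliWeight_nonneg (V := V) hp.le hp'
  have hreward : ∀ U, 0 ≤ reward U := fun U =>
    mul_nonneg (by positivity) (mul_nonneg (hw U) (occupancy_nonneg G v U))
  have hpoint : ∀ U, v ∉ U ∧ ¬IsObstructed G v U → (1 / 2) ^ b * Real.log M * bernoulliWeight p U ≤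
      bernoulliWeight p U * meanBlocking G v U + reward (insert v U) := fun U ⟨hv, hU⟩ =>
    calc (1 / 2) ^ b * Real.log M * bernoulliWeight p U
        ≤ (meanBlocking G v U + 2 * M * occupancy G v (insert v U)) * bernoulliWeight p U := by
          gcongr
          · exact hw U
          · exact mul_log_le_meanBlocking_add_occupancy hb hG hM hv hU
      _ = bernoulliWeight p U * meanBlocking G v U +
          2 * M / p * (p * bernoulliWeight p U * occupancy G v (insert v U)) := by
          field_simp
      _ ≤ bernoulliWeight p U * meanBlocking G v U + reward (insert v U) := by
          simp only [reward]
          gcongr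
          · exact occupancy_nonneg G v _
          · exact mul_bernoulliWeight_le_bernoulliWeight_insert hp.le hp' hv
  calc (1 / 2) ^ b * Real.log M * bernoulliProb p (fun U => v ∉ U ∧ ¬IsObstructed G v U)
      ≤ ∑ U, (bernoulliWeight p U * meanBlocking G v U +
          if v ∉ U then reward (insert v U) else 0) := by
        refine mul_bernoulliProb_le_sum (fun U => ?_) fun U hU => ?_
        · exact add_nonneg (mul_nonneg (hw U) (meanBlocking_nonneg G v U))
            (ite_nonneg (hreward _) le_rfl)
        · rw [if_pos hU.1]
          exact hpoint U hU
    _ ≤ ∑ U, bernoulliWeight p U * meanBlocking G v U + ∑ U, reward U := by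
        rw [sum_add_distrib, ← sum_filter]
        gcongr
        exact sum_filter_notMem_insert_le hreward v
    _ = ∑ U, bernoulliWeight p U * (meanBlocking G v U + 2 * M / p * occupancy G v U) := by
        rw [← sum_add_distrib]
        exact sum_congr rfl fun U _ => by ring

theorem mul_log_mul_sum_bernoulliProb_le (hb : 1 ≤ b) (hG : ∀ e ∈ G, #e = b + 1)
    (hdeg : maxDegLe b G d) (hind : ∀ W, IsIndep G W → #W ≤ t) (hM : 0 < M) (hp : 0 < p)
    (hp' : p ≤ 1) :
    (1 / 2) ^ b * Real.log M *
        ∑ v, bernoulliProb p (fun U => v ∉ U ∧ ¬IsObstructed G v U) ≤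
      t ^ b * d + 2 * M / p * t :=
  calc (1 / 2) ^ b * Real.log M * ∑ v, bernoulliProb p (fun U => v ∉ U ∧ ¬IsObstructed G v U)
      ≤ ∑ v, ∑ U, bernoulliWeight p U *
          (meanBlocking G v U + 2 * M / p * occupancy G v U) := by
        rw [mul_sum]
        exact sum_le_sum fun v _ => mul_log_mul_bernoulliProb_le hb hG hM hp hp' v
    _ = ∑ U, bernoulliWeight p U *
          (∑ v, meanBlocking G v U + 2 * M / p * ∑ v, occupancy G v U) := by
        rw [sum_comm]
        simp only [mul_sum, sum_add_distrib, mul_add]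
    _ ≤ ∑ U, bernoulliWeight p U * (t ^ b * d + 2 * M / p * t) := by
        gcongr with U
        · exact bernoulliWeight_nonneg hp.le hp' U
        · exact sum_meanBlocking_le hG hdeg hind U
        · exact sum_occupancy_le (fun h => by simpa using hG ∅ h) hind U
    _ = t ^ b * d + 2 * M / p * t := by rw [← sum_mul, sum_bernoulliWeight, one_mul]

end IndepAveraging

section Obstructions

variable {V : Type*} [DecidableEq V] {G : Finset (Finset V)} {U f g J : Finset V} {v : V}
  {b d : ℕ} {p : ℝ}

/-- Pairs of distinct edges with at least two common vertices, the first one through `v`. -/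
noncomputable def closePairs (G : Finset (Finset V)) (v : V) :
    Finset (Σ _ : Finset V, Finset V) :=
  {g ∈ G | v ∈ g}.sigma fun g => {h ∈ G | h ≠ g ∧ 2 ≤ #(g ∩ h)}

/-- Triples of edges `⟨f₁, f, f₂⟩`, any two of which meet in exactly one vertex, such that `v` lies
in `f₁` and `f₂` but not in `f`. -/
noncomputable def looseTriangles (G : Finset (Finset V)) (v : V) :
    Finset (Σ _ : Finset V, Σ _ : Finset V, Finset V) :=
  {f₁ ∈ G | v ∈ f₁}.sigma fun f₁ => {f ∈ G | v ∉ f ∧ #(f₁ ∩ f) = 1}.sigma fun f =>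
    {f₂ ∈ G | v ∈ f₂ ∧ #(f₁ ∩ f₂) = 1 ∧ #(f ∩ f₂) = 1}

theorem mem_closePairs {x : Σ _ : Finset V, Finset V} :
    x ∈ closePairs G v ↔ (x.1 ∈ G ∧ v ∈ x.1) ∧ x.2 ∈ G ∧ x.2 ≠ x.1 ∧ 2 ≤ #(x.1 ∩ x.2) := by
  simp only [closePairs, mem_sigma, mem_filter]

theorem mem_looseTriangles {x : Σ _ : Finset V, Σ _ : Finset V, Finset V} :
    x ∈ looseTriangles G v ↔ (x.1 ∈ G ∧ v ∈ x.1) ∧ (x.2.1 ∈ G ∧ v ∉ x.2.1 ∧ #(x.1 ∩ x.2.1) = 1) ∧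
      x.2.2 ∈ G ∧ v ∈ x.2.2 ∧ #(x.1 ∩ x.2.2) = 1 ∧ #(x.2.1 ∩ x.2.2) = 1 := by
  simp only [looseTriangles, mem_sigma, mem_filter]

theorem IsObstructed.exists_closePairs_or_looseTriangles (h : IsObstructed G v U) :
    (∃ x ∈ closePairs G v, (x.1 ∪ x.2).erase v ⊆ U) ∨
      ∃ x ∈ looseTriangles G v, (x.1 ∪ x.2.1 ∪ x.2.2).erase v ⊆ U := by
  obtain ⟨f₁, hf₁, f₂, hf₂, f, hf, hv₁, hv₂, hvf, hdisj₁, hdisj₂, hU⟩ := h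
  have hne : f₂ ≠ f₁ := by
    rintro rfl
    simp at hdisj₂
  have hclose : ∀ g h, g ∈ G → v ∈ g → h ∈ G → h ≠ g → 2 ≤ #(g ∩ h) → g ∪ h ⊆ f₁ ∪ f₂ ∪ f →
      ∃ x ∈ closePairs G v, (x.1 ∪ x.2).erase v ⊆ U := fun g h hg hvg hh hgh hcard hsub =>
    ⟨⟨g, h⟩, mem_closePairs.2 ⟨⟨hg, hvg⟩, hh, hgh, hcard⟩, subset_insert_iff.1 (hsub.trans hU)⟩
  have hpos₁ : 1 ≤ #(f₁ ∩ f) := card_pos.2 <| not_disjoint_iff_nonempty_inter.1 fun h =>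
    hdisj₁ h.symm
  have hpos₂ : 1 ≤ #(f ∩ f₂) := card_pos.2 <| not_disjoint_iff_nonempty_inter.1 fun h =>
    hdisj₂ (h.mono_right sdiff_subset)
  have hpos₁₂ : 1 ≤ #(f₁ ∩ f₂) := card_pos.2 ⟨v, mem_inter.2 ⟨hv₁, hv₂⟩⟩
  by_cases h₁ : 2 ≤ #(f₁ ∩ f)
  · exact .inl (hclose f₁ f hf₁ hv₁ hf (fun h => hvf (h ▸ hv₁)) h₁ (by grind))
  by_cases h₂ : 2 ≤ #(f₂ ∩ f)
  · exact .inl (hclose f₂ f hf₂ hv₂ hf (fun h => hvf (h ▸ hv₂)) h₂ (by grind))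
  by_cases h₁₂ : 2 ≤ #(f₁ ∩ f₂)
  · exact .inl (hclose f₁ f₂ hf₁ hv₁ hf₂ hne h₁₂ subset_union_left)
  rw [inter_comm] at h₂
  refine .inr ⟨⟨f₁, f, f₂⟩, mem_looseTriangles.2 ⟨⟨hf₁, hv₁⟩, ⟨hf, hvf, ?_⟩, hf₂, hv₂, ?_, ?_⟩,
    subset_insert_iff.1 ((by grind : f₁ ∪ f ∪ f₂ ⊆ f₁ ∪ f₂ ∪ f).trans hU)⟩ <;> dsimp only <;> omega

theorem card_erase_union_of_mem (hg : v ∈ g) (hgb : #g = b + 1) (hfb : #f = b + 1) :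
    #((g ∪ f).erase v) + #(g ∩ f) = 2 * b + 1 := by
  have hunion := card_union_add_card_inter g f
  have herase := card_erase_add_one (mem_union_left f hg)
  omega

theorem le_card_erase_union_of_mem_looseTriangles (hG : ∀ e ∈ G, #e = b + 1)
    {x : Σ _ : Finset V, Σ _ : Finset V, Finset V} (hx : x ∈ looseTriangles G v) :
    3 * b - 1 ≤ #((x.1 ∪ x.2.1 ∪ x.2.2).erase v) := by
  obtain ⟨f₁, f, f₂⟩ := x
  obtain ⟨⟨hf₁, hv₁⟩, ⟨hf, -, h₁⟩, hf₂, -, h₁₂, h₂⟩ := mem_looseTriangles.1 hx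
  have hunion := card_union_add_card_inter (f₁ ∪ f) f₂
  have hunion' := card_union_add_card_inter f₁ f
  have hinter := card_union_le (f₁ ∩ f₂) (f ∩ f₂)
  rw [← union_inter_distrib_right] at hinter
  have herase := card_erase_add_one (mem_union_left f₂ (mem_union_left f hv₁))
  have := hG _ hf₁
  have := hG _ hf
  have := hG _ hf₂
  dsimp only at *
  omega

variable [Fintype V]

theorem card_filter_superset_le (hG : ∀ e ∈ G, b ≤ #e) (hdeg : maxDegLe b G d) (hJ : #J ≤ b) :
    #{h ∈ G | J ⊆ h} ≤ Fintype.card V ^ (b - #J) * d := by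
  have hcover : {h ∈ G | J ⊆ h} ⊆
      (Jᶜ.powersetCard (b - #J)).biUnion fun T => {h ∈ G | J ∪ T ⊆ h} := fun h hh => by
    obtain ⟨hhG, hJh⟩ := mem_filter.1 hh
    obtain ⟨T, hT, hTcard⟩ := exists_subset_card_eq (s := h \ J) (n := b - #J) (by
      rw [card_sdiff_of_subset hJh]
      exact Nat.sub_le_sub_right (hG h hhG) _)
    refine mem_biUnion.2 ⟨T, mem_powersetCard.2 ⟨fun x hx => ?_, hTcard⟩, mem_filter.2
      ⟨hhG, union_subset hJh (hT.trans sdiff_subset)⟩⟩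
    exact mem_compl.2 (mem_sdiff.1 (hT hx)).2
  have hdegree : ∀ T ∈ Jᶜ.powersetCard (b - #J), #{h ∈ G | J ∪ T ⊆ h} ≤ d := fun T hT => by
    obtain ⟨hTJ, hTcard⟩ := mem_powersetCard.1 hT
    refine hdeg _ ?_
    rw [card_union_of_disjoint (disjoint_left.2 fun x hxJ hxT => mem_compl.1 (hTJ hxT) hxJ), hTcard]
    omega
  calc #{h ∈ G | J ⊆ h} ≤ #(Jᶜ.powersetCard (b - #J)) * d :=
        (card_le_card hcover).trans (card_biUnion_le_card_mul _ _ _ hdegree)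
    _ ≤ Fintype.card V ^ (b - #J) * d := by
        rw [card_powersetCard]
        gcongr
        exact (Nat.choose_le_pow _ _).trans (Nat.pow_le_pow_left (card_le_univ _) _)

theorem card_filter_superset_and_not_disjoint_le (hG : ∀ e ∈ G, b ≤ #e) (hdeg : maxDegLe b G d)
    (hJf : Disjoint J f) (hJ : #J + 1 ≤ b) :
    #{h ∈ G | J ⊆ h ∧ ¬Disjoint f h} ≤ #f * (Fintype.card V ^ (b - (#J + 1)) * d) := by
  have hcover : {h ∈ G | J ⊆ h ∧ ¬Disjoint f h} ⊆ f.biUnion fun y => {h ∈ G | insert y J ⊆ h} :=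
    fun h hh => by
      obtain ⟨hhG, hJh, hfh⟩ := mem_filter.1 hh
      obtain ⟨y, hyf, hyh⟩ := not_disjoint_iff.1 hfh
      exact mem_biUnion.2 ⟨y, hyf, mem_filter.2 ⟨hhG, insert_subset hyh hJh⟩⟩
  refine (card_le_card hcover).trans (card_biUnion_le_card_mul _ _ _ fun y hy => ?_)
  have hcard := card_insert_of_notMem (disjoint_right.1 hJf hy)
  rw [← hcard]
  exact card_filter_superset_le hG hdeg (hcard.trans_le hJ)

theorem sum_card_filter_mem_le (hG : ∀ e ∈ G, #e = b + 1) (hdeg : maxDegLe b G d) :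
    ∑ v, #{g ∈ G | v ∈ g} ≤ (b + 1) * (Fintype.card V ^ b * d) :=
  calc ∑ v, #{g ∈ G | v ∈ g} = ∑ g ∈ G, #g := by
        simp only [card_filter]
        rw [sum_comm]
        simp only [sum_boole, filter_univ_mem, Nat.cast_id]
    _ = (b + 1) * #G := by rw [sum_const_nat hG, mul_comm]
    _ ≤ (b + 1) * (Fintype.card V ^ b * d) := by
        gcongr
        simpa using card_filter_superset_le (J := ∅) (fun e he => by grind) hdeg (Nat.zero_le b)

theorem card_looseTriangles_le (hb : 2 ≤ b) (hG : ∀ e ∈ G, #e = b + 1) (hdeg : maxDegLe b G d)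
    (v : V) :
    #(looseTriangles G v) ≤ #{g ∈ G | v ∈ g} *
      ((b + 1) * (Fintype.card V ^ (b - 1) * d) * ((b + 1) * (Fintype.card V ^ (b - 2) * d))) := by
  have hG' : ∀ e ∈ G, b ≤ #e := fun e he => by grind
  have hdisj : ∀ {e e' : Finset V}, #(e ∩ e') = 1 → ¬Disjoint e e' := fun h => by
    rw [not_disjoint_iff_nonempty_inter, ← card_pos, h]
    exact one_pos
  have hmiddle : ∀ f₁ ∈ G, #{f ∈ G | v ∉ f ∧ #(f₁ ∩ f) = 1} ≤
      (b + 1) * (Fintype.card V ^ (b - 1) * d) := fun f₁ hf₁ => by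
    rw [← hG f₁ hf₁]
    refine (card_le_card (monotone_filter_right G fun f _ hf => ?_)).trans
      (card_filter_superset_and_not_disjoint_le hG' hdeg (disjoint_empty_left f₁) (by simp; omega))
    exact ⟨empty_subset f, hdisj hf.2⟩
  have hlast : ∀ f₁, ∀ f ∈ G, v ∉ f → #{f₂ ∈ G | v ∈ f₂ ∧ #(f₁ ∩ f₂) = 1 ∧ #(f ∩ f₂) = 1} ≤
      (b + 1) * (Fintype.card V ^ (b - 2) * d) := fun f₁ f hf hvf => by
    rw [← hG f hf]
    refine (card_le_card (monotone_filter_right G fun f₂ _ hf₂ => ?_)).trans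
      (card_filter_superset_and_not_disjoint_le hG' hdeg (disjoint_singleton_left.2 hvf) hb)
    exact ⟨singleton_subset_iff.2 hf₂.1, hdisj hf₂.2.2⟩
  rw [looseTriangles, card_sigma]
  refine sum_le_card_nsmul _ _ _ fun f₁ hf₁ => ?_
  rw [card_sigma]
  refine (sum_le_card_nsmul _ _ _ fun f hf => ?_).trans
    (Nat.mul_le_mul_right _ (hmiddle f₁ (mem_filter.1 hf₁).1))
  exact hlast f₁ f (mem_filter.1 hf).1 (mem_filter.1 hf).2.1

theorem sum_pow_card_inter_eq_le (hG : ∀ e ∈ G, #e = b + 1) (hdeg : maxDegLe b G d) (hp : 0 ≤ p)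
    (hpn : 1 ≤ p * Fintype.card V) (hg : g ∈ G) (hv : v ∈ g) (hJ : 2 ≤ #J) (hJb : #J ≤ b) :
    ∑ h ∈ G with g ∩ h = J, p ^ #((g ∪ h).erase v) ≤
      d * p ^ (b + 1) * (p * Fintype.card V) ^ (b - 2) := by
  have hterm : ∀ h ∈ ({h ∈ G | g ∩ h = J} : Finset (Finset V)),
      p ^ #((g ∪ h).erase v) = p ^ (b + 1) * p ^ (b - #J) := fun h hh => by
    obtain ⟨hhG, rfl⟩ := mem_filter.1 hh
    rw [← pow_add]
    congr 1
    have := card_erase_union_of_mem hv (hG g hg) (hG h hhG)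
    omega
  have hcard : (#{h ∈ G | g ∩ h = J} : ℝ) ≤ Fintype.card V ^ (b - #J) * d := by
    have hsub : {h ∈ G | g ∩ h = J} ⊆ {h ∈ G | J ⊆ h} :=
      monotone_filter_right G fun h _ (hh : g ∩ h = J) => hh.ge.trans inter_subset_right
    exact_mod_cast (card_le_card hsub).trans
      (card_filter_superset_le (fun e he => by grind) hdeg hJb)
  calc ∑ h ∈ G with g ∩ h = J, p ^ #((g ∪ h).erase v)
      = #{h ∈ G | g ∩ h = J} * (p ^ (b + 1) * p ^ (b - #J)) := by
        rw [sum_congr rfl hterm, sum_const, nsmul_eq_mul]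
    _ ≤ Fintype.card V ^ (b - #J) * d * (p ^ (b + 1) * p ^ (b - #J)) := by gcongr
    _ = d * p ^ (b + 1) * (p * Fintype.card V) ^ (b - #J) := by rw [mul_pow]; ring
    _ ≤ d * p ^ (b + 1) * (p * Fintype.card V) ^ (b - 2) := by gcongr

theorem sum_pow_card_close_le (hG : ∀ e ∈ G, #e = b + 1) (hdeg : maxDegLe b G d)
    (hp : 0 ≤ p) (hpn : 1 ≤ p * Fintype.card V) (hg : g ∈ G) (hv : v ∈ g) :
    ∑ h ∈ G with h ≠ g ∧ 2 ≤ #(g ∩ h), p ^ #((g ∪ h).erase v) ≤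
      2 ^ (b + 1) * (d * p ^ (b + 1) * (p * Fintype.card V) ^ (b - 2)) := by
  set P : Finset (Finset V) := {J ∈ g.powerset | 2 ≤ #J ∧ #J ≤ b}
  have hmaps : ∀ h ∈ ({h ∈ G | h ≠ g ∧ 2 ≤ #(g ∩ h)} : Finset (Finset V)), g ∩ h ∈ P :=
    fun h hh => by
      obtain ⟨hhG, hne, hcard⟩ := mem_filter.1 hh
      have hlt : #(g ∩ h) < #h := card_lt_card <| inter_subset_right.ssubset_of_ne fun heq =>
        hne (eq_of_subset_of_card_le (inter_eq_right.1 heq) (by rw [hG h hhG, hG g hg]))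
      rw [hG h hhG] at hlt
      exact mem_filter.2 ⟨mem_powerset.2 inter_subset_left, hcard, by omega⟩
  have hfibre : ∀ J ∈ P,
      ∑ h ∈ {h ∈ G | h ≠ g ∧ 2 ≤ #(g ∩ h)} with g ∩ h = J, p ^ #((g ∪ h).erase v) ≤
        d * p ^ (b + 1) * (p * Fintype.card V) ^ (b - 2) := fun J hJ => by
    obtain ⟨-, hJ, hJb⟩ := mem_filter.1 hJ
    refine le_trans (sum_le_sum_of_subset_of_nonneg ?_ fun h _ _ => pow_nonneg hp _)
      (sum_pow_card_inter_eq_le hG hdeg hp hpn hg hv hJ hJb)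
    exact filter_subset_filter _ (filter_subset _ _)
  have hP : (#P : ℝ) ≤ 2 ^ (b + 1) := by
    rw [← hG g hg]
    exact_mod_cast (card_filter_le _ _).trans_eq (card_powerset g)
  calc ∑ h ∈ G with h ≠ g ∧ 2 ≤ #(g ∩ h), p ^ #((g ∪ h).erase v)
      = ∑ J ∈ P, ∑ h ∈ {h ∈ G | h ≠ g ∧ 2 ≤ #(g ∩ h)} with g ∩ h = J,
          p ^ #((g ∪ h).erase v) := (sum_fiberwise_of_maps_to hmaps _).symm
    _ ≤ #P * (d * p ^ (b + 1) * (p * Fintype.card V) ^ (b - 2)) := by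
        rw [← nsmul_eq_mul]
        exact sum_le_card_nsmul _ _ _ hfibre
    _ ≤ 2 ^ (b + 1) * (d * p ^ (b + 1) * (p * Fintype.card V) ^ (b - 2)) := by gcongr

theorem sum_closePairs_le (hb : 2 ≤ b) (hG : ∀ e ∈ G, #e = b + 1) (hdeg : maxDegLe b G d)
    (hp : 0 ≤ p) (hpn : 1 ≤ p * Fintype.card V) :
    ∑ v, ∑ x ∈ closePairs G v, p ^ #((x.1 ∪ x.2).erase v) ≤
      (b + 1) * 2 ^ (b + 1) * d ^ 2 * p * (p * Fintype.card V) ^ (2 * b - 2) := by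
  have hedges : ∑ v, (#{g ∈ G | v ∈ g} : ℝ) ≤ (b + 1) * (Fintype.card V ^ b * d) := by
    exact_mod_cast sum_card_filter_mem_le hG hdeg
  calc ∑ v, ∑ x ∈ closePairs G v, p ^ #((x.1 ∪ x.2).erase v)
      ≤ ∑ v, #{g ∈ G | v ∈ g} *
          (2 ^ (b + 1) * (d * p ^ (b + 1) * (p * Fintype.card V) ^ (b - 2))) := by
        refine sum_le_sum fun v _ => ?_
        rw [closePairs, sum_sigma, ← nsmul_eq_mul]
        refine sum_le_card_nsmul _ _ _ fun g hg => ?_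
        obtain ⟨hg, hv⟩ := mem_filter.1 hg
        exact sum_pow_card_close_le hG hdeg hp hpn hg hv
    _ ≤ (b + 1) * (Fintype.card V ^ b * d) *
          (2 ^ (b + 1) * (d * p ^ (b + 1) * (p * Fintype.card V) ^ (b - 2))) := by
        rw [← sum_mul]
        gcongr
    _ = (b + 1) * 2 ^ (b + 1) * d ^ 2 * p * (p * Fintype.card V) ^ (2 * b - 2) := by
        rw [show 2 * b - 2 = b + (b - 2) by omega,
          pow_add (p * (Fintype.card V : ℝ)) b, mul_pow p _ b]
        ring

theorem sum_looseTriangles_le (hb : 2 ≤ b) (hG : ∀ e ∈ G, #e = b + 1) (hdeg : maxDegLe b G d)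
    (hp : 0 ≤ p) (hp' : p ≤ 1) :
    ∑ v, ∑ x ∈ looseTriangles G v, p ^ #((x.1 ∪ x.2.1 ∪ x.2.2).erase v) ≤
      (b + 1) ^ 3 * d ^ 3 * p ^ 2 * (p * Fintype.card V) ^ (3 * b - 3) := by
  set n := Fintype.card V
  have hedges : ∑ v, (#{g ∈ G | v ∈ g} : ℝ) ≤ (b + 1) * (n ^ b * d) := by
    exact_mod_cast sum_card_filter_mem_le hG hdeg
  have hcard : ∀ v, (#(looseTriangles G v) : ℝ) ≤ #{g ∈ G | v ∈ g} *
      ((b + 1) * (n ^ (b - 1) * d) * ((b + 1) * (n ^ (b - 2) * d))) := fun v => by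
    exact_mod_cast card_looseTriangles_le hb hG hdeg v
  calc ∑ v, ∑ x ∈ looseTriangles G v, p ^ #((x.1 ∪ x.2.1 ∪ x.2.2).erase v)
      ≤ ∑ v, #(looseTriangles G v) * p ^ (3 * b - 1) := by
        refine sum_le_sum fun v _ => ?_
        rw [← nsmul_eq_mul]
        exact sum_le_card_nsmul _ _ _ fun x hx => pow_le_pow_of_le_one hp hp'
          (le_card_erase_union_of_mem_looseTriangles hG hx)
    _ ≤ ∑ v, #{g ∈ G | v ∈ g} *
          ((b + 1) * (n ^ (b - 1) * d) * ((b + 1) * (n ^ (b - 2) * d))) * p ^ (3 * b - 1) := by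
        gcongr with v
        exact hcard v
    _ ≤ (b + 1) * (n ^ b * d) *
          ((b + 1) * (n ^ (b - 1) * d) * ((b + 1) * (n ^ (b - 2) * d))) * p ^ (3 * b - 1) := by
        rw [← sum_mul, ← sum_mul]
        gcongr
    _ = (b + 1) ^ 3 * d ^ 3 * p ^ 2 * (p * n) ^ (3 * b - 3) := by
        rw [show 3 * b - 1 = 2 + (3 * b - 3) by omega, mul_pow,
          show 3 * b - 3 = b + (b - 1) + (b - 2) by omega]
        ring

theorem bernoulliProb_isObstructed_le (hp : 0 ≤ p) (hp' : p ≤ 1) (v : V) :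
    bernoulliProb p (fun U => v ∉ U ∧ IsObstructed G v U) ≤
      ∑ x ∈ closePairs G v, p ^ #((x.1 ∪ x.2).erase v) +
        ∑ x ∈ looseTriangles G v, p ^ #((x.1 ∪ x.2.1 ∪ x.2.2).erase v) := by
  refine (bernoulliProb_le_sum_pow_card hp hp' (s := (closePairs G v).disjSum (looseTriangles G v))
    (S := Sum.elim (fun x => (x.1 ∪ x.2).erase v) fun x => (x.1 ∪ x.2.1 ∪ x.2.2).erase v)
    fun U hU => ?_).trans_eq (sum_disjSum _ _ _)
  rcases hU.2.exists_closePairs_or_looseTriangles with ⟨x, hx, hxU⟩ | ⟨x, hx, hxU⟩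
  · exact ⟨.inl x, inl_mem_disjSum.2 hx, hxU⟩
  · exact ⟨.inr x, inr_mem_disjSum.2 hx, hxU⟩

theorem sum_bernoulliProb_isObstructed_le (hb : 2 ≤ b) (hG : ∀ e ∈ G, #e = b + 1)
    (hdeg : maxDegLe b G d) (hp : 0 ≤ p) (hp' : p ≤ 1) (hpn : 1 ≤ p * Fintype.card V) :
    ∑ v, bernoulliProb p (fun U => v ∉ U ∧ IsObstructed G v U) ≤
      (b + 1) * 2 ^ (b + 1) * d ^ 2 * p * (p * Fintype.card V) ^ (2 * b - 2) +
        (b + 1) ^ 3 * d ^ 3 * p ^ 2 * (p * Fintype.card V) ^ (3 * b - 3) := by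
  refine (sum_le_sum fun v _ => bernoulliProb_isObstructed_le hp hp' v).trans ?_
  rw [sum_add_distrib]
  exact add_le_add (sum_closePairs_le hb hG hdeg hp hpn) (sum_looseTriangles_le hb hG hdeg hp hp')

end Obstructions

section TrFree

variable {V : Type*} [DecidableEq V] {G : Finset (Finset V)} {b t : ℕ}

theorem not_isObstructed_of_not_containsTr_two (hG : ∀ e ∈ G, #e = 2) (hT : ¬ContainsTr 2 G)
    (v : V) (U : Finset V) : ¬IsObstructed G v U := by
  rintro ⟨f₁, hf₁, f₂, hf₂, f, hf, hv₁, hv₂, hvf, hdisj₁, hdisj₂, -⟩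
  have heq_pair : ∀ e ∈ G, ∀ x ∈ e, ∀ y ∈ e, x ≠ y → {x, y} = e := fun e he x hx y hy hxy =>
    eq_of_subset_of_card_le (insert_subset hx (singleton_subset_iff.2 hy)) <| by
      rw [hG e he, card_pair hxy]
  obtain ⟨x, hxf, hx₁⟩ := not_disjoint_iff.1 hdisj₁
  obtain ⟨y, hyf, hy⟩ := not_disjoint_iff.1 hdisj₂
  obtain ⟨hy₂, hy₁⟩ := mem_sdiff.1 hy
  refine hT ⟨{v}, f, disjoint_singleton_left.2 hvf, card_singleton v, hG f hf, hf, fun z hz => ?_⟩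
  rw [← heq_pair f hf x hxf y hyf (ne_of_mem_of_not_mem hx₁ hy₁), mem_insert, mem_singleton] at hz
  rcases hz with rfl | rfl
  · rwa [heq_pair f₁ hf₁ z hx₁ v hv₁ (ne_of_mem_of_not_mem hxf hvf)]
  · rwa [heq_pair f₂ hf₂ z hy₂ v hv₂ (ne_of_mem_of_not_mem hyf hvf)]

theorem maxDegLe_of_not_containsTr (hG : ∀ e ∈ G, #e = b + 1) (hT : ¬ContainsTr (b + 1) G)
    (hind : ∀ W, IsIndep G W → #W ≤ t) : maxDegLe b G t := by
  intro S hS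
  set N : Finset V := {v ∈ G.biUnion id | v ∉ S ∧ insert v S ∈ G}
  have hN : IsIndep G N := fun R hR hRN => hT
    ⟨S, R, disjoint_right.2 fun v hv => (mem_filter.1 (hRN hv)).2.1, hS, hG R hR, hR,
      fun v hv => (mem_filter.1 (hRN hv)).2.2⟩
  have hcover : {e ∈ G | S ⊆ e} ⊆ N.image (insert · S) := fun e he => by
    obtain ⟨heG, hSe⟩ := mem_filter.1 he
    obtain ⟨v, hvS, rfl⟩ := exists_eq_insert_iff.2 ⟨hSe, by rw [hS, hG e heG]⟩
    exact mem_image_of_mem _ (mem_filter.2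
      ⟨mem_biUnion.2 ⟨_, heG, mem_insert_self v S⟩, hvS, heG⟩)
  exact ((card_le_card hcover).trans card_image_le).trans (hind N hN)

end TrFree

section Parameters

variable {b : ℕ} {n p s T : ℝ}

theorem four_mul_mul_sq_le (hb : 1 ≤ b) (hs : 1 ≤ s) (hT : s ^ (6 * b + 1) ≤ T)
    (hns : 4 * 2 ^ (b + 1) * T ^ (b + 1) ≤ n * s) : 4 * (T * s ^ 2) ≤ n := by
  have hT1 : 1 ≤ T := (one_le_pow₀ hs).trans hT
  have hsT : s ^ 3 ≤ T := (pow_le_pow_right₀ hs (by omega)).trans hT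
  have hpow : T ^ 2 ≤ T ^ (b + 1) := pow_le_pow_right₀ hT1 (by omega)
  refine le_of_mul_le_mul_right ?_ (by linarith : 0 < s)
  calc 4 * (T * s ^ 2) * s = 4 * 1 * (T * s ^ 3) := by ring
    _ ≤ 4 * 2 ^ (b + 1) * (T * T) := by gcongr; exact one_le_pow₀ one_le_two
    _ ≤ 4 * 2 ^ (b + 1) * T ^ (b + 1) := by rw [← sq]; gcongr
    _ ≤ n * s := hns

theorem closePairs_bound_le_div_eight (hb : 1 ≤ b) (hs : 1 ≤ s) (hT : s ^ (6 * b + 1) ≤ T)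
    (hn : 0 < n) (hns : 4 * 2 ^ (b + 1) * T ^ (b + 1) ≤ n * s) (hp : p * n = T * s ^ 2) :
    (b + 1) * 2 ^ (b + 1) * T ^ 2 * p * (p * n) ^ (2 * b - 2) ≤ n / 8 := by
  have hT0 : 0 < T := (pow_pos (by linarith) _).trans_le hT
  have hR : (b + 1 : ℝ) ≤ 2 ^ (b + 1) := by exact_mod_cast (b + 1).lt_two_pow_self.le
  have hsT : s ^ (4 * b) ≤ T := (pow_le_pow_right₀ hs (by omega)).trans hT
  have hpow : (p * n) ^ (2 * b - 2) * (p * n) * s ^ 2 = T ^ (2 * b - 1) * s ^ (4 * b) := by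
    rw [← pow_succ, hp, mul_pow, ← pow_mul, mul_assoc, ← pow_add]
    congr 2 <;> omega
  refine le_of_mul_le_mul_right ?_ (show 0 < 8 * n * s ^ 2 by positivity)
  calc (b + 1) * 2 ^ (b + 1) * T ^ 2 * p * (p * n) ^ (2 * b - 2) * (8 * n * s ^ 2)
      = 8 * (b + 1) * 2 ^ (b + 1) * T ^ 2 * ((p * n) ^ (2 * b - 2) * (p * n) * s ^ 2) := by ring
    _ = 8 * (b + 1) * 2 ^ (b + 1) * T ^ (2 * b + 1) * s ^ (4 * b) := by
        rw [hpow, show 2 * b + 1 = 2 + (2 * b - 1) by omega, pow_add T]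
        ring
    _ ≤ 16 * 2 ^ (b + 1) * 2 ^ (b + 1) * T ^ (2 * b + 1) * T := by gcongr; norm_num
    _ = (4 * 2 ^ (b + 1) * T ^ (b + 1)) ^ 2 := by ring
    _ ≤ (n * s) ^ 2 := by gcongr
    _ = n / 8 * (8 * n * s ^ 2) := by ring

theorem looseTriangles_bound_le_div_eight (hb : 1 ≤ b) (hs : 1 ≤ s) (hT : s ^ (6 * b + 1) ≤ T)
    (hn : 0 < n) (hns : 4 * 2 ^ (b + 1) * T ^ (b + 1) ≤ n * s) (hp : p * n = T * s ^ 2) :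
    (b + 1) ^ 3 * T ^ 3 * p ^ 2 * (p * n) ^ (3 * b - 3) ≤ n / 8 := by
  have hT0 : 0 < T := (pow_pos (by linarith) _).trans_le hT
  have hR : (b + 1 : ℝ) ≤ 2 ^ (b + 1) := by exact_mod_cast (b + 1).lt_two_pow_self.le
  have hpow : (p * n) ^ (3 * b - 3) * (p * n) ^ 2 * s ^ 3 = T ^ (3 * b - 1) * s ^ (6 * b + 1) := by
    rw [← pow_add, hp, mul_pow, ← pow_mul, mul_assoc, ← pow_add]
    congr 2 <;> omega
  refine le_of_mul_le_mul_right ?_ (show 0 < 8 * n ^ 2 * s ^ 3 by positivity)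
  calc (b + 1) ^ 3 * T ^ 3 * p ^ 2 * (p * n) ^ (3 * b - 3) * (8 * n ^ 2 * s ^ 3)
      = 8 * (b + 1) ^ 3 * T ^ 3 * ((p * n) ^ (3 * b - 3) * (p * n) ^ 2 * s ^ 3) := by ring
    _ = 8 * (b + 1) ^ 3 * T ^ (3 * b + 2) * s ^ (6 * b + 1) := by
        rw [hpow, show 3 * b + 2 = 3 + (3 * b - 1) by omega, pow_add T]
        ring
    _ ≤ 64 * (2 ^ (b + 1)) ^ 3 * T ^ (3 * b + 2) * T := by gcongr; norm_num
    _ = (4 * 2 ^ (b + 1) * T ^ (b + 1)) ^ 3 := by ring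
    _ ≤ (n * s) ^ 3 := by gcongr
    _ = n / 8 * (8 * n ^ 2 * s ^ 3) := by ring

end Parameters

section Conclusion

variable {V : Type*} [Fintype V] [DecidableEq V] {G : Finset (Finset V)} {b t : ℕ} {p s : ℝ}

theorem sum_bernoulliProb_isObstructed_le_card_div_four (hb : 1 ≤ b) (hG : ∀ e ∈ G, #e = b + 1)
    (hT : ¬ContainsTr (b + 1) G) (hdeg : maxDegLe b G t) (hp : 0 < p) (hp' : p ≤ 1) (hs : 1 ≤ s)
    (hst : s ^ (6 * b + 1) ≤ t) (hcard : 4 * 2 ^ (b + 1) * (t : ℝ) ^ (b + 1) ≤ Fintype.card V * s)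
    (hpn : p * Fintype.card V = t * s ^ 2) :
    ∑ v, bernoulliProb p (fun U => v ∉ U ∧ IsObstructed G v U) ≤ Fintype.card V / 4 := by
  have ht : (1 : ℝ) ≤ t := (one_le_pow₀ hs).trans hst
  have hm : 1 ≤ p * Fintype.card V := hpn ▸ one_le_mul_of_one_le_of_one_le ht (one_le_pow₀ hs)
  have hn : (0 : ℝ) < Fintype.card V := pos_of_mul_pos_right (one_pos.trans_le hm) hp.le
  rcases hb.eq_or_lt with rfl | hb₂
  · simp only [not_isObstructed_of_not_containsTr_two hG hT, and_false, bernoulliProb,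
      filter_false, sum_empty, sum_const_zero]
    positivity
  · have hclose := closePairs_bound_le_div_eight hb hs hst hn hcard hpn
    have hloose := looseTriangles_bound_le_div_eight hb hs hst hn hcard hpn
    have hsum := sum_bernoulliProb_isObstructed_le hb₂ hG hdeg hp.le hp' hm
    linarith

theorem card_div_two_le_sum_bernoulliProb (hp : p ≤ 1 / 4)
    (h : ∑ v, bernoulliProb p (fun U => v ∉ U ∧ IsObstructed G v U) ≤ Fintype.card V / 4) :
    (Fintype.card V / 2 : ℝ) ≤ ∑ v, bernoulliProb p (fun U => v ∉ U ∧ ¬IsObstructed G v U) := by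
  have hsplit : ∑ v, bernoulliProb p (fun U => v ∉ U ∧ IsObstructed G v U) +
      ∑ v, bernoulliProb p (fun U => v ∉ U ∧ ¬IsObstructed G v U) = Fintype.card V * (1 - p) := by
    simp only [← sum_add_distrib, bernoulliProb_and_add_bernoulliProb_and_not,
      bernoulliProb_notMem, sum_const, card_univ, nsmul_eq_mul]
  nlinarith [Nat.cast_nonneg (α := ℝ) (Fintype.card V)]

theorem card_mul_log_le_of_not_containsTr (hb : 1 ≤ b) (hG : ∀ e ∈ G, #e = b + 1)
    (hT : ¬ContainsTr (b + 1) G) (hind : ∀ W, IsIndep G W → #W ≤ t)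
    (hs : 1 ≤ s) (hst : s ^ (6 * b + 1) ≤ t) (hlog : 4 * 2 ^ (b + 1) ≤ Real.log s)
    (hcard : 4 * 2 ^ (b + 1) * (t : ℝ) ^ (b + 1) ≤ Fintype.card V * s) :
    Fintype.card V * Real.log s ≤ 2 * 2 ^ (b + 1) * (t : ℝ) ^ (b + 1) := by
  set n : ℝ := (Fintype.card V : ℝ)
  have ht : (1 : ℝ) ≤ t := (one_le_pow₀ hs).trans hst
  have hn : 0 < n :=
    pos_of_mul_pos_left ((by positivity : (0 : ℝ) < _).trans_le hcard) (by linarith)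
  have hdense := four_mul_mul_sq_le hb hs hst hcard
  set p : ℝ := t * s ^ 2 / n
  have hpn : p * n = t * s ^ 2 := div_mul_cancel₀ _ hn.ne'
  have hp : 0 < p := by positivity
  have hp4 : p ≤ 1 / 4 := by
    rw [div_le_iff₀ hn]
    linarith
  have hdeg := maxDegLe_of_not_containsTr hG hT hind
  have hhalf : n / 2 ≤ _ := card_div_two_le_sum_bernoulliProb hp4 <|
    sum_bernoulliProb_isObstructed_le_card_div_four hb hG hT hdeg hp (by linarith) hs hst hcard hpn
  have hmain := mul_log_mul_sum_bernoulliProb_le (M := s) hb hG hdeg hind (by linarith) hp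
    (by linarith)
  have hreward : 2 * s / p * t ≤ 2 * n := by
    rw [div_mul_eq_mul_div, div_le_iff₀ hp, mul_assoc 2 n, mul_comm n, hpn]
    nlinarith [mul_le_mul_of_nonneg_left hs (by positivity : 0 ≤ s * t)]
  have hlog' : 8 ≤ (1 / 2) ^ b * Real.log s := by
    rw [one_div_pow, one_div, le_inv_mul_iff₀ (by positivity)]
    linarith [pow_succ (2 : ℝ) b]
  have hfinal : (1 / 2) ^ b * Real.log s * n ≤ 4 * (t : ℝ) ^ (b + 1) := by
    rw [pow_succ (t : ℝ)]
    nlinarith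
  rw [one_div_pow, one_div, mul_assoc, inv_mul_le_iff₀ (by positivity)] at hfinal
  calc n * Real.log s = Real.log s * n := mul_comm _ _
    _ ≤ 2 ^ b * (4 * (t : ℝ) ^ (b + 1)) := hfinal
    _ = 2 * 2 ^ (b + 1) * (t : ℝ) ^ (b + 1) := by ring

theorem containsTr_or_le_indepNum {r : ℕ} (hr : 2 ≤ r) (ht : 48 * r * 2 ^ r ≤ Real.log t)
    (hcard : 48 * r * 2 ^ r * (t : ℝ) ^ r ≤ Fintype.card V * Real.log t)
    (hG : ∀ e ∈ G, #e = r) : ContainsTr r G ∨ t ≤ indepNum G := by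
  by_contra! hcon
  obtain ⟨b, rfl⟩ : ∃ b, r = b + 1 := ⟨r - 1, by omega⟩
  have hind : ∀ W, IsIndep G W → #W ≤ t := fun W hW =>
    (le_sup (f := card) (mem_filter.2 ⟨mem_powerset.2 (subset_univ W), hW⟩)).trans hcon.2.le
  have hA : (0 : ℝ) < 48 * (b + 1 : ℕ) * 2 ^ (b + 1) := by positivity
  have ht0 : (0 : ℝ) < t := Nat.cast_pos.2 <| Nat.pos_of_ne_zero fun h => by
    simp only [h, Nat.cast_zero, Real.log_zero] at ht
    exact hA.not_ge ht
  set s : ℝ := (t : ℝ) ^ ((12 * (b + 1) : ℕ) : ℝ)⁻¹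
  have hst : s ^ (12 * (b + 1)) = t := Real.rpow_inv_natCast_pow ht0.le (by omega)
  have hs0 : 0 < s := Real.rpow_pos_of_pos ht0 _
  have hlog : Real.log t = 12 * (b + 1 : ℕ) * Real.log s := by
    rw [← hst, Real.log_pow, Nat.cast_mul, Nat.cast_ofNat]
  have hb : (0 : ℝ) < 12 * (b + 1 : ℕ) := by positivity
  have hs : 4 * 2 ^ (b + 1) ≤ Real.log s := by
    rw [hlog] at ht
    refine le_of_mul_le_mul_left ?_ hb
    linarith
  have hcard' : 4 * 2 ^ (b + 1) * (t : ℝ) ^ (b + 1) ≤ Fintype.card V * Real.log s := by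
    rw [hlog] at hcard
    refine le_of_mul_le_mul_left ?_ hb
    linarith
  have hlog_le : Real.log s ≤ s := Real.log_le_self hs0.le
  have hs1 : 1 ≤ s := by
    have : (1 : ℝ) ≤ 2 ^ (b + 1) := one_le_pow₀ one_le_two
    linarith
  have hupper := card_mul_log_le_of_not_containsTr (by omega) hG hcon.1 hind hs1
    (hst ▸ pow_le_pow_right₀ hs1 (by omega)) hs (hcard'.trans (by gcongr))
  have : (0 : ℝ) < 2 ^ (b + 1) * (t : ℝ) ^ (b + 1) := by positivity
  linarith

end Conclusion

/-- For every `r ≥ 2` there is `C > 0` such that for all `t ≥ 2` and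
`N ≥ C·t^r/log t`, every `r`-graph on `N` vertices contains a copy of `T_r` or has an
independent set of size `t`; i.e. `R(T_r, K_t^{(r)}) = O(t^r / log t)`. -/
theorem stmt8 (r : ℕ) (hr : 2 ≤ r) :
    ∃ C : ℝ, 0 < C ∧ ∀ t : ℕ, 2 ≤ t → ∀ N : ℕ,
      C * (t : ℝ) ^ r / Real.log t ≤ (N : ℝ) →
      ∀ (V : Type) [Fintype V] [DecidableEq V], ∀ (G : Finset (Finset V)),
        Fintype.card V = N →
        (∀ e ∈ G, e.card = r) →
        ContainsTr r G ∨ t ≤ indepNum G := by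
  have hA : (1 : ℝ) ≤ 48 * r * 2 ^ r := by
    have : (1 : ℝ) ≤ r := by exact_mod_cast (by omega : 1 ≤ r)
    have : (1 : ℝ) ≤ 2 ^ r := one_le_pow₀ one_le_two
    nlinarith
  obtain ⟨t₀, ht₀⟩ := exists_nat_ge (Real.exp (48 * r * 2 ^ r))
  have ht₀_pos : (0 : ℝ) < t₀ := (Real.exp_pos _).trans_le ht₀
  have hlog₀ : 48 * r * 2 ^ r ≤ Real.log t₀ := (Real.le_log_iff_exp_le ht₀_pos).2 ht₀
  refine ⟨48 * r * 2 ^ r * (t₀ : ℝ) ^ r, by positivity, ?_⟩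
  rintro t ht N hN V _ _ G rfl hG
  have ht₁ : (1 : ℝ) < t := by exact_mod_cast ht
  rw [div_le_iff₀ (Real.log_pos ht₁)] at hN
  rcases le_total t₀ t with h | h
  · refine containsTr_or_le_indepNum hr (hlog₀.trans ?_) (le_trans ?_ hN) hG
    · gcongr
    · have : (1 : ℝ) ≤ (t₀ : ℝ) ^ r := one_le_pow₀ (Nat.one_le_cast.2 (Nat.cast_pos.1 ht₀_pos))
      exact mul_le_mul_of_nonneg_right (le_mul_of_one_le_right (by positivity) this) (by positivity)
  · refine (containsTr_or_le_indepNum hr hlog₀ ?_ hG).imp_right h.trans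
    have hlog : Real.log t ≤ (t : ℝ) ^ r :=
      (Real.log_le_self (by linarith)).trans (le_self_pow₀ ht₁.le (by omega))
    have hn : 48 * r * 2 ^ r * (t₀ : ℝ) ^ r ≤ Fintype.card V :=
      le_of_mul_le_mul_right (hN.trans (by gcongr)) (by positivity : 0 < (t : ℝ) ^ r)
    exact hn.trans (le_mul_of_one_le_right (Nat.cast_nonneg _) (hA.trans hlog₀))
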